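/- Let 0 < ℓ < m with gcd(ℓ,m) = 1 and n = ℓ + m. Then R = k[x^n, x^{n-ℓ} y^ℓ, x^{n-m} y^m, y^n] is Cohen–Macaulay if and only if m = ℓ + 1. In particular, k[x^4, x^3 y, x y^3, y^4] is not Cohen–Macaulay. -/

import Mathlib

open MvPolynomial

set_option synthInstance.maxHeartbeats 1000000
set_option maxHeartbeats 2000000

/-!
The ring `R` is the semigroup ring `k[S]`, where `S` is generated by the exponents `(n, 0)`,
`(m, l)`, `(l, m)` and `(0, n)`. Comparing exponents shows that `x ^ n, y ^ n` is a regular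
sequence on `k[S]` iff every exponent `e` with `e + (n, 0) ∈ S` and `e + (0, n) ∈ S` lies in `S`.

If `m = l + 1`, then `(l + 1) • (m, l) = l • (l, m) + (n, 0)`,
`(l + 1) • (l, m) = l • (m, l) + (0, n)` and `(m, l) + (l, m) = (n, 0) + (0, n)`, so modulo
`(n, 0)` and `(0, n)` every element of `S` is `b • (m, l)` or `c • (l, m)` with `b, c ≤ l`. These
have distinct classes modulo `n`, so an element `e` as above has the same representative in both
memberships and is therefore in `S`.

If `l + 2 ≤ m`, the exponent `e = ((m - 1) * l, (l + 1) * l)` is not in `S`, although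
`e + (n, 0) = (l + 1) • (m, l)` and `e + (m - l - 1) • (0, n) = (m - 1) • (l, m)` are.
-/

section RegularSequence

lemma isWeaklyRegular_pair_iff {A : Type*} [CommRing A] {x y : A} :
    RingTheory.Sequence.IsWeaklyRegular A [x, y] ↔ IsSMulRegular A x ∧ ∀ f, x ∣ y * f → x ∣ f := by
  rw [RingTheory.Sequence.isWeaklyRegular_cons_iff,
    RingTheory.Sequence.isWeaklyRegular_singleton_iff]
  refine and_congr_right fun _ => (isSMulRegular_quotient_iff_mem_of_smul_mem _ y).trans ?_
  simp only [Submodule.mem_smul_pointwise_iff_exists, Submodule.mem_top, true_and, smul_eq_mul,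
    Dvd.dvd, eq_comm]

lemma top_ne_ofList_smul_top_of_forall_map_eq_zero {A B : Type*} [CommRing A] [CommRing B]
    [Nontrivial B] (φ : A →+* B) {rs : List A} (hrs : ∀ r ∈ rs, φ r = 0) :
    (⊤ : Submodule A A) ≠ Ideal.ofList rs • ⊤ := by
  have hker : Ideal.ofList rs ≤ RingHom.ker φ := Ideal.span_le.2 hrs
  intro htop
  refine RingHom.ker_ne_top φ (top_le_iff.1 (le_trans ?_ hker))
  rw [htop, smul_eq_mul, Ideal.mul_top]

end RegularSequence

lemma mem_of_add_mem_of_nsmul_add_mem {M : Type*} [AddCommMonoid M] {S : AddSubmonoid M} {u v : M}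
    (hv : v ∈ S) (h : ∀ e, u + e ∈ S → v + e ∈ S → e ∈ S) {e : M} {j : ℕ} (hu : u + e ∈ S)
    (hj : j • v + e ∈ S) : e ∈ S := by
  induction j with
  | zero => simpa using hj
  | succ j ih =>
    refine ih (h _ ?_ (by rwa [succ_nsmul', add_assoc] at hj))
    rw [add_left_comm]
    exact S.add_mem (S.nsmul_mem hv j) hu

section MonomialSubalgebra

variable {σ k : Type*}

lemma mem_support_monomial_one_mul [CommSemiring k] {u e : σ →₀ ℕ} {f : MvPolynomial σ k} :
    e ∈ (monomial u 1 * f).support ↔ ∃ r ∈ f.support, u + r = e := by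
  rw [mem_support_iff, coeff_monomial_mul', one_mul, ite_ne_right_iff]
  constructor
  · rintro ⟨hue, he⟩
    exact ⟨e - u, mem_support_iff.2 he, add_tsub_cancel_of_le hue⟩
  · rintro ⟨r, hr, rfl⟩
    exact ⟨le_self_add, by rwa [add_tsub_cancel_left, ← mem_support_iff]⟩

/-- The semigroup ring `k[S]` of a submonoid `S` of exponents, realised inside the polynomial
ring as the polynomials all of whose monomials have exponent in `S`. -/
noncomputable def monomialSubalgebra (k : Type*) [CommSemiring k] (S : AddSubmonoid (σ →₀ ℕ)) :
    Subalgebra k (MvPolynomial σ k) :=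
  (restrictSupport k (S : Set (σ →₀ ℕ))).toSubalgebra
    ((monomial_mem_restrictSupport k).2 (.inl S.zero_mem))
    (fun f g hf hg => by
      rw [← S.coe_add_self_eq, restrictSupport_add]
      exact Submodule.mul_mem_mul hf hg)

namespace monomialSubalgebra

section CommSemiring

variable [CommSemiring k] {S : AddSubmonoid (σ →₀ ℕ)}

lemma toSubmodule_eq :
    Subalgebra.toSubmodule (monomialSubalgebra k S) = restrictSupport k (S : Set (σ →₀ ℕ)) :=
  rfl

lemma mem_iff {f : MvPolynomial σ k} :
    f ∈ monomialSubalgebra k S ↔ ∀ e ∈ f.support, e ∈ S :=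
  Iff.rfl

lemma monomial_one_mem {e : σ →₀ ℕ} (he : e ∈ S) :
    monomial e (1 : k) ∈ monomialSubalgebra k S :=
  (monomial_mem_restrictSupport k).2 (.inl he)

lemma adjoin_image_monomial (G : Set (σ →₀ ℕ)) :
    Algebra.adjoin k ((fun e => monomial e (1 : k)) '' G) =
      monomialSubalgebra k (AddSubmonoid.closure G) := by
  refine le_antisymm (Algebra.adjoin_le ?_) ?_
  · rintro _ ⟨e, he, rfl⟩
    exact monomial_one_mem (AddSubmonoid.subset_closure he)
  · rw [← OrderEmbedding.le_iff_le Subalgebra.toSubmodule, toSubmodule_eq,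
      restrictSupport_eq_span, Submodule.span_le]
    rintro _ ⟨e, he, rfl⟩
    induction he using AddSubmonoid.closure_induction with
    | mem e he => exact Algebra.subset_adjoin ⟨e, he, rfl⟩
    | zero => exact one_mem (Algebra.adjoin k _)
    | add e e' _ _ he he' =>
      simpa [monomial_mul] using (Algebra.adjoin k _).mul_mem he he'

lemma dvd_iff {x f : monomialSubalgebra k S} {u : σ →₀ ℕ}
    (hx : (x : MvPolynomial σ k) = monomial u 1) :
    x ∣ f ↔ ∀ e ∈ (f : MvPolynomial σ k).support, ∃ r ∈ S, u + r = e := by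
  constructor
  · rintro ⟨g, rfl⟩ e he
    rw [MulMemClass.coe_mul, hx, mem_support_monomial_one_mul] at he
    obtain ⟨r, hr, rfl⟩ := he
    exact ⟨r, mem_iff.1 g.2 r hr, rfl⟩
  · intro h
    have hg : divMonomial (f : MvPolynomial σ k) u ∈ monomialSubalgebra k S := by
      refine mem_iff.2 fun e he => ?_
      rw [mem_support_iff, coeff_divMonomial, ← mem_support_iff] at he
      obtain ⟨r, hr, hre⟩ := h _ he
      rwa [← add_left_cancel hre]
    refine ⟨⟨_, hg⟩, Subtype.ext ?_⟩
    have hmod : modMonomial (f : MvPolynomial σ k) u = 0 := by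
      ext e
      by_cases hue : u ≤ e
      · rw [coeff_modMonomial_of_le _ hue, coeff_zero]
      · rw [coeff_modMonomial_of_not_le _ hue, coeff_zero, ← notMem_support_iff]
        intro he
        obtain ⟨r, -, rfl⟩ := h e he
        exact hue le_self_add
    simpa [hx, hmod] using (divMonomial_add_modMonomial (f : MvPolynomial σ k) u).symm

end CommSemiring

variable [CommRing k] [Nontrivial k] {S : AddSubmonoid (σ →₀ ℕ)} {u v : σ →₀ ℕ}
  {x y : monomialSubalgebra k S}

theorem isRegular_pair_iff (hu : u ≠ 0) (hv : v ≠ 0)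
    (hx : (x : MvPolynomial σ k) = monomial u 1) (hy : (y : MvPolynomial σ k) = monomial v 1) :
    RingTheory.Sequence.IsRegular (monomialSubalgebra k S) [x, y] ↔
      ∀ s ∈ S, (∃ t ∈ S, u + t = v + s) → ∃ r ∈ S, u + r = s := by
  classical
  have hxreg : IsSMulRegular (monomialSubalgebra k S) x := fun f g hfg => by
    simpa [hx] using congrArg Subtype.val hfg
  have hproper : (⊤ : Submodule (monomialSubalgebra k S) (monomialSubalgebra k S)) ≠
      Ideal.ofList [x, y] • ⊤ :=
    top_ne_ofList_smul_top_of_forall_map_eq_zero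
      (constantCoeff.comp (monomialSubalgebra k S).val.toRingHom) <| by
      simp [hx, hy, constantCoeff_eq, coeff_monomial, hu, hv]
  have hdvd (f : monomialSubalgebra k S) : x ∣ y * f ↔
      ∀ s ∈ (f : MvPolynomial σ k).support, ∃ t ∈ S, u + t = v + s := by
    rw [dvd_iff hx, MulMemClass.coe_mul, hy]
    simp only [mem_support_monomial_one_mul, forall_exists_index, and_imp,
      forall_apply_eq_imp_iff₂]
  rw [RingTheory.Sequence.isRegular_iff, isWeaklyRegular_pair_iff, and_iff_left hproper,
    and_iff_right hxreg]
  simp only [hdvd, dvd_iff hx]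
  constructor
  · intro h s hs hvs
    simpa [support_monomial] using
      h ⟨_, monomial_one_mem hs⟩ (by simpa [support_monomial] using hvs)
  · exact fun h f hf s hs => h s (mem_iff.1 f.2 s hs) (hf s hs)

theorem isRegular_pair_iff_of_disjoint (huv : Disjoint u v) (hu : u ≠ 0) (hv : v ≠ 0)
    (hx : (x : MvPolynomial σ k) = monomial u 1) (hy : (y : MvPolynomial σ k) = monomial v 1) :
    RingTheory.Sequence.IsRegular (monomialSubalgebra k S) [x, y] ↔
      ∀ e, u + e ∈ S → v + e ∈ S → e ∈ S := by
  rw [isRegular_pair_iff hu hv hx hy]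
  constructor
  · intro h e hue hve
    obtain ⟨r, hr, hre⟩ := h (u + e) hue ⟨v + e, hve, add_left_comm u v e⟩
    rwa [← add_left_cancel hre]
  · rintro h s hs ⟨t, ht, hts⟩
    have hus : u ≤ s := by
      intro i
      have hi : u i = 0 ∨ v i = 0 := by
        have hmin := DFunLike.congr_fun huv.eq_bot i
        rwa [Finsupp.inf_apply, bot_eq_zero, Finsupp.zero_apply,
          Nat.min_eq_zero_iff] at hmin
      have htsi := DFunLike.congr_fun hts i
      simp only [Finsupp.add_apply] at htsi
      omega
    obtain ⟨e, rfl⟩ := exists_add_of_le hus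
    obtain rfl : t = v + e := add_left_cancel (hts.trans (add_left_comm v u e))
    exact ⟨e, h e hs ht, rfl⟩

end monomialSubalgebra

end MonomialSubalgebra

section ProjectiveMonomialCurve

/-- The exponent of the monomial `x ^ p * y ^ q` in two variables. -/
noncomputable def planeExponent (p q : ℕ) : Fin 2 →₀ ℕ :=
  Finsupp.single 0 p + Finsupp.single 1 q

@[simp] lemma planeExponent_apply_zero (p q : ℕ) : planeExponent p q 0 = p := by
  simp [planeExponent]

@[simp] lemma planeExponent_apply_one (p q : ℕ) : planeExponent p q 1 = q := by
  simp [planeExponent]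

lemma planeExponent_eq_zero_iff {p q : ℕ} : planeExponent p q = 0 ↔ p = 0 ∧ q = 0 := by
  simp [Finsupp.ext_iff, Fin.forall_fin_two]

lemma disjoint_planeExponent (p q : ℕ) :
    Disjoint (planeExponent p 0) (planeExponent 0 q) := by
  simp [disjoint_iff, bot_eq_zero, Finsupp.ext_iff, Fin.forall_fin_two]

lemma X_pow_mul_X_pow_eq_monomial {k : Type*} [CommSemiring k] (p q : ℕ) :
    (X 0 ^ p * X 1 ^ q : MvPolynomial (Fin 2) k) = monomial (planeExponent p q) 1 := by
  simp [planeExponent, X_pow_eq_monomial, monomial_mul]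

/-- The semigroup of exponents of the monomials lying in
`k[x ^ (l + m), x ^ m * y ^ l, x ^ l * y ^ m, y ^ (l + m)]`, the homogeneous coordinate ring of a
projective monomial curve of degree `l + m`. -/
noncomputable def curveSemigroup (l m : ℕ) : AddSubmonoid (Fin 2 →₀ ℕ) :=
  AddSubmonoid.closure
    {planeExponent (l + m) 0, planeExponent m l, planeExponent l m, planeExponent 0 (l + m)}

lemma mem_curveSemigroup {l m : ℕ} {e : Fin 2 →₀ ℕ} :
    e ∈ curveSemigroup l m ↔ ∃ a b c d : ℕ,
      e 0 = a * (l + m) + b * m + c * l ∧ e 1 = b * l + c * m + d * (l + m) := by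
  rw [curveSemigroup, ← Submodule.span_nat_eq_addSubmonoidClosure, Submodule.mem_toAddSubmonoid]
  simp only [Submodule.mem_span_insert, Submodule.mem_span_singleton]
  constructor
  · rintro ⟨a, _, ⟨b, _, ⟨c, _, ⟨d, rfl⟩, rfl⟩, rfl⟩, rfl⟩
    refine ⟨a, b, c, d, ?_, ?_⟩ <;> simp <;> ring
  · rintro ⟨a, b, c, d, h0, h1⟩
    refine ⟨a, _, ⟨b, _, ⟨c, _, ⟨d, rfl⟩, rfl⟩, rfl⟩, Finsupp.ext (Fin.forall_fin_two.2 ?_)⟩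
    simp [h0, h1, add_assoc]

/-- In the semigroup of the rational curve with `m = l + 1`, the pairs `(b, c)` for which
`b • (l + 1, l) + c • (l, l + 1)` is an Apéry element with respect to `x ^ (2 * l + 1)` and
`y ^ (2 * l + 1)`. -/
def IsAperyIndex (l b c : ℕ) : Prop :=
  b ≤ l ∧ c ≤ l ∧ (b = 0 ∨ c = 0)

lemma IsAperyIndex.eq_of_add_eq {l a b c a' b' c' : ℕ} (h : IsAperyIndex l b c)
    (h' : IsAperyIndex l b' c')
    (heq : a * (l + (l + 1)) + b * (l + 1) + c * l =
      a' * (l + (l + 1)) + b' * (l + 1) + c' * l) :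
    b = b' ∧ c = c' := by
  obtain ⟨hb, hc, hbc⟩ := h
  obtain ⟨hb', hc', hbc'⟩ := h'
  -- `2 * (l + 1) ≡ 1` and `2 * l ≡ -1` modulo `2 * l + 1`, so doubling `heq` isolates `b - c`.
  have hdvd : (2 * l + 1 : ℤ) ∣ (b - c) - (b' - c') := by
    zify at heq
    exact ⟨2 * a' + b' + c' - (2 * a + b + c), by linear_combination 2 * heq⟩
  have hdiff : ((b - c) - (b' - c') : ℤ) = 0 :=
    Int.eq_zero_of_abs_lt_dvd hdvd (abs_lt.2 (by constructor <;> omega))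
  omega

lemma exists_isAperyIndex (l a b c d : ℕ) : ∃ a' b' c' d', IsAperyIndex l b' c' ∧
    a' * (l + (l + 1)) + b' * (l + 1) + c' * l = a * (l + (l + 1)) + b * (l + 1) + c * l ∧
    b' * l + c' * (l + 1) + d' * (l + (l + 1)) = b * l + c * (l + 1) + d * (l + (l + 1)) := by
  induction hs : b + c using Nat.strong_induction_on generalizing a b c d with
  | _ s ih =>
    by_cases hindex : IsAperyIndex l b c
    · exact ⟨a, b, c, d, hindex, rfl, rfl⟩
    suffices ∃ a₁ b₁ c₁ d₁, b₁ + c₁ < b + c ∧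
        a₁ * (l + (l + 1)) + b₁ * (l + 1) + c₁ * l =
          a * (l + (l + 1)) + b * (l + 1) + c * l ∧
        b₁ * l + c₁ * (l + 1) + d₁ * (l + (l + 1)) =
          b * l + c * (l + 1) + d * (l + (l + 1)) by
      obtain ⟨a₁, b₁, c₁, d₁, hlt, h0, h1⟩ := this
      obtain ⟨a', b', c', d', hindex', h0', h1'⟩ := ih _ (hs ▸ hlt) a₁ b₁ c₁ d₁ rfl
      exact ⟨a', b', c', d', hindex', h0'.trans h0, h1'.trans h1⟩
    obtain hb | hc | ⟨hb, hc⟩ : l + 1 ≤ b ∨ l + 1 ≤ c ∨ 1 ≤ b ∧ 1 ≤ c := by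
      unfold IsAperyIndex at hindex
      omega
    · obtain ⟨b, rfl⟩ := Nat.exists_eq_add_of_le hb
      exact ⟨a + 1, b, c + l, d, by omega, by ring, by ring⟩
    · obtain ⟨c, rfl⟩ := Nat.exists_eq_add_of_le hc
      exact ⟨a, b + l, c, d + 1, by omega, by ring, by ring⟩
    · obtain ⟨b, rfl⟩ := Nat.exists_eq_add_of_le hb
      obtain ⟨c, rfl⟩ := Nat.exists_eq_add_of_le hc
      exact ⟨a + 1, b, c, d + 1, by omega, by ring, by ring⟩

lemma exists_isAperyIndex_of_mem {l : ℕ} {e : Fin 2 →₀ ℕ} (he : e ∈ curveSemigroup l (l + 1)) :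
    ∃ a b c d, IsAperyIndex l b c ∧ e 0 = a * (l + (l + 1)) + b * (l + 1) + c * l ∧
      e 1 = b * l + c * (l + 1) + d * (l + (l + 1)) := by
  obtain ⟨a, b, c, d, h0, h1⟩ := mem_curveSemigroup.1 he
  obtain ⟨a', b', c', d', hindex, h0', h1'⟩ := exists_isAperyIndex l a b c d
  exact ⟨a', b', c', d', hindex, h0.trans h0'.symm, h1.trans h1'.symm⟩

lemma mem_curveSemigroup_succ_of_add_mem {l : ℕ} {e : Fin 2 →₀ ℕ}
    (hx : planeExponent (l + (l + 1)) 0 + e ∈ curveSemigroup l (l + 1))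
    (hy : planeExponent 0 (l + (l + 1)) + e ∈ curveSemigroup l (l + 1)) :
    e ∈ curveSemigroup l (l + 1) := by
  obtain ⟨a, b, c, d, hindex, hx0, hx1⟩ := exists_isAperyIndex_of_mem hx
  obtain ⟨a', b', c', d', hindex', hy0, -⟩ := exists_isAperyIndex_of_mem hy
  simp only [Finsupp.add_apply, planeExponent_apply_zero, planeExponent_apply_one,
    zero_add] at hx0 hx1 hy0
  obtain ⟨rfl, rfl⟩ := hindex.eq_of_add_eq (a := a) (a' := a' + 1) hindex' (by
    linear_combination hy0 - hx0)
  exact mem_curveSemigroup.2 ⟨a', b, c, d, hy0, hx1⟩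

lemma planeExponent_notMem_curveSemigroup {l r : ℕ} (hg : l.Coprime (l + r + 2)) :
    planeExponent ((l + r + 1) * l) ((l + 1) * l) ∉ curveSemigroup l (l + r + 2) := by
  rw [mem_curveSemigroup, planeExponent_apply_zero, planeExponent_apply_one]
  rintro ⟨a, b, c, d, h0, h1⟩
  have hdeg : l = a + b + c + d :=
    Nat.eq_of_mul_eq_mul_left (show 0 < l + (l + r + 2) by omega) (by linear_combination h0 + h1)
  have hdvd : l + r + 2 ∣ (a + c + 1) * l :=
    (Nat.dvd_add_right (Dvd.intro (a + b) rfl)).1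
      (Dvd.intro l (show (l + r + 2) * l = (l + r + 2) * (a + b) + (a + c + 1) * l by
        linear_combination h0))
  have hle := Nat.le_of_dvd (Nat.succ_pos _) (hg.symm.dvd_of_dvd_mul_right hdvd)
  omega

lemma exists_add_mem_notMem_curveSemigroup {l m : ℕ} (hm : l + 2 ≤ m) (hg : l.Coprime m) :
    ∃ e, planeExponent (l + m) 0 + e ∈ curveSemigroup l m ∧
      planeExponent 0 (l + m) + e ∈ curveSemigroup l m ∧ e ∉ curveSemigroup l m := by
  obtain ⟨r, rfl⟩ := Nat.exists_eq_add_of_le hm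
  rw [add_right_comm] at hg ⊢
  by_contra! h
  have hy : planeExponent 0 (l + (l + r + 2)) ∈ curveSemigroup l (l + r + 2) :=
    AddSubmonoid.subset_closure (by simp)
  refine planeExponent_notMem_curveSemigroup hg (mem_of_add_mem_of_nsmul_add_mem hy h
    (j := r + 1) (mem_curveSemigroup.2 ⟨0, l + 1, 0, 0, ?_, ?_⟩)
    (mem_curveSemigroup.2 ⟨0, 0, l + r + 1, 0, ?_, ?_⟩))
  all_goals
    simp only [Finsupp.add_apply, Finsupp.smul_apply, planeExponent_apply_zero,
      planeExponent_apply_one, smul_eq_mul]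
    ring

theorem forall_mem_curveSemigroup_iff {l m : ℕ} (hlm : l < m) (hg : l.Coprime m) :
    (∀ e, planeExponent (l + m) 0 + e ∈ curveSemigroup l m →
      planeExponent 0 (l + m) + e ∈ curveSemigroup l m → e ∈ curveSemigroup l m) ↔
      m = l + 1 := by
  constructor
  · intro h
    by_contra hne
    obtain ⟨e, hx, hy, he⟩ := exists_add_mem_notMem_curveSemigroup (show l + 2 ≤ m by omega) hg
    exact he (h e hx hy)
  · rintro rfl e
    exact mem_curveSemigroup_succ_of_add_mem

lemma adjoin_eq_monomialSubalgebra_curveSemigroup (k : Type*) [CommSemiring k] (l m : ℕ) :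
    Algebra.adjoin k
        ({X 0 ^ (l + m), X 0 ^ m * X 1 ^ l, X 0 ^ l * X 1 ^ m, X 1 ^ (l + m)} :
          Set (MvPolynomial (Fin 2) k)) =
      monomialSubalgebra k (curveSemigroup l m) := by
  rw [curveSemigroup, ← monomialSubalgebra.adjoin_image_monomial]
  simp [Set.image_insert_eq, ← X_pow_mul_X_pow_eq_monomial]

end ProjectiveMonomialCurve

theorem stmt_19_general {k : Type*} [CommRing k] [Nontrivial k] {l m n : ℕ} (hlm : l < m)
    (hg : Nat.gcd l m = 1) (hn : n = l + m) {R : Subalgebra k (MvPolynomial (Fin 2) k)}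
    (hR : R = Algebra.adjoin k
      ({X 0 ^ n, X 0 ^ (n - l) * X 1 ^ l, X 0 ^ (n - m) * X 1 ^ m, X 1 ^ n} :
        Set (MvPolynomial (Fin 2) k)))
    {xn yn : R} (hx : (xn : MvPolynomial (Fin 2) k) = X 0 ^ n)
    (hy : (yn : MvPolynomial (Fin 2) k) = X 1 ^ n) :
    RingTheory.Sequence.IsRegular R [xn, yn] ↔ m = l + 1 := by
  subst hn
  rw [Nat.add_sub_cancel_left, Nat.add_sub_cancel,
    adjoin_eq_monomialSubalgebra_curveSemigroup] at hR
  subst hR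
  have hn : l + m ≠ 0 := by omega
  rw [monomialSubalgebra.isRegular_pair_iff_of_disjoint (u := planeExponent (l + m) 0)
    (v := planeExponent 0 (l + m)), forall_mem_curveSemigroup_iff hlm hg]
  · exact disjoint_planeExponent _ _
  · exact fun h => hn (planeExponent_eq_zero_iff.1 h).1
  · exact fun h => hn (planeExponent_eq_zero_iff.1 h).2
  · rw [hx, ← X_pow_mul_X_pow_eq_monomial, pow_zero, mul_one]
  · rw [hy, ← X_pow_mul_X_pow_eq_monomial, pow_zero, one_mul]

/-- Let `0 < ℓ < m` with `gcd(ℓ,m) = 1` and `n = ℓ + m`.  Then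
`R = k[x^n, x^{n-ℓ}y^ℓ, x^{n-m}y^m, y^n]` is Cohen–Macaulay iff `m = ℓ + 1`.  In particular,
`k[x⁴, x³y, xy³, y⁴]` is not Cohen–Macaulay.  (Cohen–Macaulayness is equivalent to
`x^n, y^n` being a regular sequence on `R`.) -/
theorem stmt_19 (k : Type*) [Field k] :
    (∀ (l m n : ℕ), 0 < l → l < m → Nat.gcd l m = 1 → n = l + m →
      ∀ (R : Subalgebra k (MvPolynomial (Fin 2) k)),
        R = Algebra.adjoin k
          ({X 0 ^ n, X 0 ^ (n - l) * X 1 ^ l, X 0 ^ (n - m) * X 1 ^ m, X 1 ^ n} :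
            Set (MvPolynomial (Fin 2) k)) →
        ∀ (xn yn : R), (xn : MvPolynomial (Fin 2) k) = X 0 ^ n →
          (yn : MvPolynomial (Fin 2) k) = X 1 ^ n →
          (RingTheory.Sequence.IsRegular R [xn, yn] ↔ m = l + 1)) ∧
    (∀ (R : Subalgebra k (MvPolynomial (Fin 2) k)),
      R = Algebra.adjoin k
        ({X 0 ^ 4, X 0 ^ 3 * X 1, X 0 * X 1 ^ 3, X 1 ^ 4} : Set (MvPolynomial (Fin 2) k)) →
      ∀ (x4 y4 : R), (x4 : MvPolynomial (Fin 2) k) = X 0 ^ 4 →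
        (y4 : MvPolynomial (Fin 2) k) = X 1 ^ 4 →
        ¬ RingTheory.Sequence.IsRegular R [x4, y4]) := by
  refine ⟨fun l m n _ hlm hg hn R hR xn yn hx hy => stmt_19_general hlm hg hn hR hx hy, ?_⟩
  intro R hR x4 y4 hx hy hreg
  exact absurd ((stmt_19_general (l := 1) (m := 3) (by decide) (by decide) rfl
    (by simpa using hR) hx hy).1 hreg) (by decide)
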